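/- Let W be a graphon, k ≥ 1 an integer, δ > 0, and P a measurable partition of [0,1] into k sets each of Lebesgue measure 1/k. Then limsup_{n→∞} (log₂ N_□(n,δ;W)) / C(n,2) ≤ Ent(E[W|P]) + h̃(4k²δ), where C(n,2) = n(n-1)/2. -/

import Mathlib

open MeasureTheory Set Filter

noncomputable section

/-- A graphon: a symmetric measurable function `ℝ → ℝ → ℝ` with values in `[0,1]`
(only its values on `[0,1]²` matter). -/
def IsGraphon (W : ℝ → ℝ → ℝ) : Prop :=
  (∀ x y, W x y = W y x) ∧ Measurable (Function.uncurry W) ∧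
    ∀ x y, W x y ∈ Set.Icc (0 : ℝ) 1

/-- The cut norm `‖U‖_□`, the supremum over measurable `S, T ⊆ [0,1]` of
`|∫_{S×T} U|`. -/
def cutNorm (U : ℝ → ℝ → ℝ) : ℝ :=
  sSup { r : ℝ | ∃ S T : Set ℝ, MeasurableSet S ∧ MeasurableSet T ∧
    S ⊆ Set.Icc 0 1 ∧ T ⊆ Set.Icc 0 1 ∧
    r = |∫ p in S ×ˢ T, U p.1 p.2| }

/-- `d_□(W₁, W₂) = ‖W₁ - W₂‖_□`. -/
def dCut (W₁ W₂ : ℝ → ℝ → ℝ) : ℝ := cutNorm (fun x y => W₁ x y - W₂ x y)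

/-- A Lebesgue-measure-preserving map `[0,1] → [0,1]`. -/
def IsMPSelf (σ : ℝ → ℝ) : Prop :=
  MeasureTheory.MeasurePreserving σ
      (MeasureTheory.volume.restrict (Set.Icc (0:ℝ) 1))
      (MeasureTheory.volume.restrict (Set.Icc (0:ℝ) 1)) ∧
    Set.MapsTo σ (Set.Icc (0:ℝ) 1) (Set.Icc (0:ℝ) 1)

/-- The cut distance `δ_□(W₁, W₂)`. -/
def deltaCut (W₁ W₂ : ℝ → ℝ → ℝ) : ℝ :=
  sInf { r : ℝ | ∃ σ₁ σ₂ : ℝ → ℝ, IsMPSelf σ₁ ∧ IsMPSelf σ₂ ∧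
    r = cutNorm (fun x y => W₁ (σ₁ x) (σ₁ y) - W₂ (σ₂ x) (σ₂ y)) }

/-- The binary entropy function `h` (base-2 logarithm; `logb 2 0 = 0` by convention,
so `h 0 = h 1 = 0`). -/
def binEnt (x : ℝ) : ℝ := -x * Real.logb 2 x - (1 - x) * Real.logb 2 (1 - x)

/-- `h̃ x = h (min x (1/2))`. -/
def htilde (x : ℝ) : ℝ := binEnt (min x (1/2))

/-- The entropy `Ent(W) = ∫₀¹∫₀¹ h(W(x,y)) dx dy` of a graphon. -/
def graphonEnt (W : ℝ → ℝ → ℝ) : ℝ :=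
  ∫ x in Set.Icc (0:ℝ) 1, ∫ y in Set.Icc (0:ℝ) 1, binEnt (W x y)

open Classical in
/-- The graphon `W_G` of a simple graph `G` on `{1, …, n}` (vertices as `Fin n`,
vertex `i : Fin n` representing `i+1`): `W_G x y = 1` iff `⌈nx⌉⌈ny⌉ ∈ E(G)`. -/
def graphonOfGraph {n : ℕ} (G : SimpleGraph (Fin n)) : ℝ → ℝ → ℝ := fun x y =>
  if ∃ i j : Fin n, G.Adj i j ∧ ⌈(n : ℝ) * x⌉ = ((i : ℕ) : ℤ) + 1 ∧
      ⌈(n : ℝ) * y⌉ = ((j : ℕ) : ℤ) + 1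
  then 1 else 0

/-- A labelled graph class: a set of graphs on `{1,…,n}` for each `n`. -/
abbrev GraphClass := ∀ n : ℕ, Set (SimpleGraph (Fin n))

/-- A graph class is closed under relabelling by permutations. -/
def IsGraphClass (Q : GraphClass) : Prop :=
  ∀ (n : ℕ) (π : Equiv.Perm (Fin n)) (G : SimpleGraph (Fin n)),
    G ∈ Q n → G.comap ⇑π ∈ Q n

/-- A hereditary graph class: a graph class closed under taking induced subgraphs
(relabelled by the order-preserving bijection). -/
def IsHereditary (Q : GraphClass) : Prop :=
  IsGraphClass Q ∧
    ∀ (m n : ℕ) (f : Fin m → Fin n), StrictMono f →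
      ∀ G ∈ Q n, G.comap f ∈ Q m

/-- `Q̂`: the set of graphons which are limits (in cut distance) of sequences of graphs in
the class `Q` whose orders tend to infinity. -/
def limitSet (Q : GraphClass) : Set (ℝ → ℝ → ℝ) :=
  { W | IsGraphon W ∧
    ∃ (nk : ℕ → ℕ) (Gk : ∀ k, SimpleGraph (Fin (nk k))),
      (∀ k, Gk k ∈ Q (nk k)) ∧ Filter.Tendsto nk Filter.atTop Filter.atTop ∧
      Filter.Tendsto (fun k => deltaCut (graphonOfGraph (Gk k)) W) Filter.atTop (nhds 0) }

/-- `C(n,2) = n(n-1)/2` as a real number. -/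
def choose2 (n : ℕ) : ℝ := (n : ℝ) * ((n : ℝ) - 1) / 2

open Classical in
/-- The step function `E[W | P]` obtained by averaging `W` over the products of the
parts of the partition `P` of `[0,1]`. -/
def condExpPart {k : ℕ} (P : Fin k → Set ℝ) (W : ℝ → ℝ → ℝ) : ℝ → ℝ → ℝ := fun x y =>
  ∑ i : Fin k, ∑ j : Fin k,
    if x ∈ P i ∧ y ∈ P j then ⨍ p in (P i) ×ˢ (P j), W p.1 p.2 else 0

/-- `W̄_n`: the step function of `W` for the partition of `[0,1]` into `n` consecutive
intervals of length `1/n`. -/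
def barStep (n : ℕ) (W : ℝ → ℝ → ℝ) : ℝ → ℝ → ℝ :=
  condExpPart (fun i : Fin n => Set.Ioc (((i : ℕ) : ℝ)/n) ((((i : ℕ) : ℝ) + 1)/n)) W

/-- `N̂_□(n, δ; W)`: the number of graphs `G` on `{1,…,n}` with `d_□(W_G, W) ≤ δ`. -/
def NhatCut (n : ℕ) (δ : ℝ) (W : ℝ → ℝ → ℝ) : ℕ :=
  Nat.card {G : SimpleGraph (Fin n) // dCut (graphonOfGraph G) W ≤ δ}

/-- `N_□(n, δ; W)`: the number of graphs `G` on `{1,…,n}` with `δ_□(W_G, W) ≤ δ`. -/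
def NCut (n : ℕ) (δ : ℝ) (W : ℝ → ℝ → ℝ) : ℕ :=
  Nat.card {G : SimpleGraph (Fin n) // deltaCut (graphonOfGraph G) W ≤ δ}

open Classical in
/-- The induced density `p(F; W)` of a graph `F` on `{1,…,k}` in a graphon `W`. -/
def inducedDensity {k : ℕ} (F : SimpleGraph (Fin k)) (W : ℝ → ℝ → ℝ) : ℝ :=
  ∫ x : Fin k → ℝ in Set.univ.pi (fun _ : Fin k => Set.Icc (0:ℝ) 1),
    ∏ i : Fin k, ∏ j : Fin k,
      if i < j then (if F.Adj i j then W (x i) (x j) else 1 - W (x i) (x j)) else 1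

open Classical in
/-- The randomness support graphon `1_{rand(W)}` of `W`. -/
def randIndicator (W : ℝ → ℝ → ℝ) : ℝ → ℝ → ℝ := fun x y =>
  if 0 < W x y ∧ W x y < 1 then 1 else 0

/-- A kernel `U` is `K_r`-free if `∏_{i<j} U(x_i, x_j) = 0` for a.e. `x ∈ [0,1]^r`. -/
def KFree (r : ℕ) (U : ℝ → ℝ → ℝ) : Prop :=
  ∀ᵐ x ∂(MeasureTheory.volume.restrict (Set.univ.pi fun _ : Fin r => Set.Icc (0:ℝ) 1)),
    (∏ i : Fin r, ∏ j : Fin r, if i < j then U (x i) (x j) else 1) = 0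

open Classical in
/-- The graphon `W^{(r,s)}`: equal to `1/2` off the diagonal blocks, `1` on the first `s`
diagonal blocks `I_i × I_i`, and `0` on the remaining diagonal blocks. -/
def Wrs (r s : ℕ) : ℝ → ℝ → ℝ := fun x y =>
  if ∃ i j : Fin r, i ≠ j ∧ x ∈ Set.Ioc (((i:ℕ):ℝ)/r) ((((i:ℕ):ℝ)+1)/r) ∧
      y ∈ Set.Ioc (((j:ℕ):ℝ)/r) ((((j:ℕ):ℝ)+1)/r)
  then 1/2
  else if ∃ i : Fin r, (i:ℕ) < s ∧ x ∈ Set.Ioc (((i:ℕ):ℝ)/r) ((((i:ℕ):ℝ)+1)/r) ∧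
      y ∈ Set.Ioc (((i:ℕ):ℝ)/r) ((((i:ℕ):ℝ)+1)/r)
  then 1 else 0

/-- `E_r = ⋃_{i ≠ j} I_i × I_j` where `I_i`, `i = 1, …, r`, are the consecutive
intervals of length `1/r` in `[0,1]`. -/
def Er (r : ℕ) : Set (ℝ × ℝ) :=
  ⋃ (i : Fin r) (j : Fin r) (_ : i ≠ j),
    (Set.Ioc (((i:ℕ):ℝ)/r) ((((i:ℕ):ℝ)+1)/r)) ×ˢ (Set.Ioc (((j:ℕ):ℝ)/r) ((((j:ℕ):ℝ)+1)/r))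

/-- `R_r`: the set of graphons equal to `1/2` on `E_r` and `{0,1}`-valued elsewhere
on `[0,1]²`. -/
def Rset (r : ℕ) : Set (ℝ → ℝ → ℝ) :=
  { W | IsGraphon W ∧ (∀ p ∈ Er r, W p.1 p.2 = 1/2) ∧
      ∀ p ∈ ((Set.Icc (0:ℝ) 1) ×ˢ (Set.Icc (0:ℝ) 1)) \ Er r,
        W p.1 p.2 = 0 ∨ W p.1 p.2 = 1 }

/-- A graphon is random-free if it is `{0,1}`-valued a.e. on `[0,1]²`. -/
def IsRandomFree (W : ℝ → ℝ → ℝ) : Prop :=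
  ∀ᵐ p ∂(MeasureTheory.volume.restrict ((Set.Icc (0:ℝ) 1) ×ˢ (Set.Icc (0:ℝ) 1))),
    W (Prod.fst p) (Prod.snd p) = 0 ∨ W (Prod.fst p) (Prod.snd p) = 1



lemma ent_count {E : Type*} [Fintype E] [DecidableEq E] (F : Finset (E → Bool)) (hF : F.Nonempty) :
    Real.log (F.card : ℝ) ≤ ∑ e, Real.binEntropy (((F.filter (fun f => f e = true)).card : ℝ) / F.card) := by
  set N : ℝ := (F.card : ℝ) with hN
  have hNpos : 0 < N := by rw [hN]; exact_mod_cast hF.card_pos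
  set p : E → ℝ := fun e => ((F.filter (fun f => f e = true)).card : ℝ) / N with hp
  have hsplit : ∀ e, ((F.filter (fun f => f e = true)).card : ℝ) + ((F.filter (fun f => ¬ f e = true)).card : ℝ) = N := by
    intro e; rw [hN]; exact_mod_cast Finset.card_filter_add_card_filter_not (s := F) (fun f => f e = true)
  have hp0 : ∀ e, 0 ≤ p e := fun e => by positivity
  have hp1 : ∀ e, 1 - p e = ((F.filter (fun f => ¬ f e = true)).card : ℝ) / N := by
    intro e
    rw [← hsplit e] at hNpos
    simp only [hp]; rw [← hsplit e]; field_simp; ring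
  let wt : (E → Bool) → E → ℝ := fun f e => if f e = true then p e else 1 - p e
  have hwt0 : ∀ f e, 0 ≤ wt f e := by
    intro f e; simp only [wt]; split_ifs
    · exact hp0 e
    · rw [hp1]; positivity
  have hwtpos : ∀ f ∈ F, ∀ e, 0 < wt f e := by
    intro f hf e; simp only [wt]; split_ifs with h
    · have : 0 < (F.filter (fun f => f e = true)).card := Finset.card_pos.mpr ⟨f, by simp [hf, h]⟩
      have : (0:ℝ) < (F.filter (fun f => f e = true)).card := by exact_mod_cast this
      positivity
    · rw [hp1]
      have : 0 < (F.filter (fun f => ¬ f e = true)).card := Finset.card_pos.mpr ⟨f, by simp [hf, h]⟩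
      have : (0:ℝ) < (F.filter (fun f => ¬ f e = true)).card := by exact_mod_cast this
      positivity
  have htot : ∑ f : E → Bool, ∏ e, wt f e = 1 := by
    have := Finset.prod_univ_sum (fun _ : E => (Finset.univ : Finset Bool)) (fun e b => if b = true then p e else 1 - p e)
    rw [Fintype.piFinset_univ] at this
    simp only [wt]
    rw [← this]; simp
  have hle : ∑ f ∈ F, ∏ e, wt f e ≤ 1 := by
    refine le_trans ?_ htot.le
    refine Finset.sum_le_sum_of_subset_of_nonneg (Finset.subset_univ F) ?_
    intro f _ _
    exact Finset.prod_nonneg fun e _ => hwt0 f e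
  have hlog : ∀ f ∈ F, Real.log N + ∑ e, Real.log (wt f e) ≤ N * ∏ e, wt f e - 1 := by
    intro f hf
    have hpos : 0 < ∏ e, wt f e := Finset.prod_pos fun e _ => hwtpos f hf e
    rw [← Real.log_prod (fun e _ => (hwtpos f hf e).ne'), ← Real.log_mul hNpos.ne' hpos.ne']
    exact Real.log_le_sub_one_of_pos (mul_pos hNpos hpos)
  have hs := Finset.sum_le_sum hlog
  rw [Finset.sum_add_distrib, Finset.sum_sub_distrib, ← Finset.mul_sum, Finset.sum_comm] at hs
  simp only [Finset.sum_const, nsmul_eq_mul, mul_one] at hs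
  rw [← hN] at hs
  have hent : ∀ e, ∑ f ∈ F, Real.log (wt f e) = - (N * Real.binEntropy (p e)) := by
    intro e
    rw [← Finset.sum_filter_add_sum_filter_not F (fun f => f e = true)]
    rw [Finset.sum_congr rfl (g := fun _ => Real.log (p e)) (fun f hf => by simp [wt, (Finset.mem_filter.mp hf).2])]
    rw [Finset.sum_congr (s₁ := F.filter (fun f => ¬ f e = true)) rfl (g := fun _ => Real.log (1 - p e)) (fun f hf => by simp only [wt, if_neg (Finset.mem_filter.mp hf).2])]
    simp only [Finset.sum_const, nsmul_eq_mul]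
    have h1 : ((F.filter (fun f => f e = true)).card : ℝ) = N * p e := by simp only [hp]; field_simp
    have h2 : ((F.filter (fun f => ¬ f e = true)).card : ℝ) = N * (1 - p e) := by rw [hp1]; field_simp
    rw [h1, h2, Real.binEntropy]
    simp only [Real.log_inv]; ring
  simp only [hent] at hs
  rw [Finset.sum_neg_distrib, ← Finset.mul_sum] at hs
  have : N * Real.log N ≤ N * ∑ e, Real.binEntropy (p e) := by nlinarith
  exact le_of_mul_le_mul_left this hNpos

lemma binEntropy_subadd {y d : ℝ} (hy : 0 ≤ y) (hd : 0 ≤ d) (h : y + d ≤ 1) :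
    Real.binEntropy (y + d) ≤ Real.binEntropy y + Real.binEntropy d := by
  rcases eq_or_lt_of_le (add_nonneg hy hd) with h0 | h0
  · have : y = 0 := by linarith
    have : d = 0 := by linarith
    subst_vars; simp
  have hc := Real.strictConcave_binEntropy.concaveOn.2
  have key : ∀ t, 0 ≤ t → t ≤ y + d → t / (y+d) * Real.binEntropy (y+d) ≤ Real.binEntropy t := by
    intro t ht ht'
    have := @hc (y+d) ⟨h0.le, h⟩ 0 ⟨le_rfl, zero_le_one⟩ (t/(y+d)) (1 - t/(y+d)) (by positivity)
      (by rw [sub_nonneg, div_le_one h0]; exact ht') (by ring)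
    simp only [smul_eq_mul, Real.binEntropy_zero, mul_zero, add_zero] at this
    rwa [div_mul_cancel₀ _ h0.ne'] at this
  have h1 := key y hy (by linarith)
  have h2 := key d hd (by linarith)
  have : y / (y+d) * Real.binEntropy (y+d) + d / (y+d) * Real.binEntropy (y+d) = Real.binEntropy (y+d) := by
    field_simp
  linarith

lemma binEntropy_perturb {x y e : ℝ} (hx : x ∈ Set.Icc (0:ℝ) 1) (hy : y ∈ Set.Icc (0:ℝ) 1) (he : |x - y| ≤ e) :
    Real.binEntropy x ≤ Real.binEntropy y + Real.binEntropy (min e (1/2)) := by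
  have hy0 := Real.binEntropy_nonneg hy.1 hy.2
  by_cases h : e ≤ 1/2
  · rw [min_eq_left h]
    have hm : Real.binEntropy |x - y| ≤ Real.binEntropy e := by
      apply Real.binEntropy_strictMonoOn.monotoneOn _ _ he
      · exact ⟨abs_nonneg _, by norm_num at h ⊢; linarith⟩
      · exact ⟨(abs_nonneg _).trans he, by norm_num at h ⊢; linarith⟩
    rcases le_total y x with hxy | hxy
    · rw [abs_of_nonneg (by linarith)] at hm
      have := binEntropy_subadd (y := y) (d := x - y) hy.1 (by linarith) (by linarith [hx.2])
      rw [show y + (x - y) = x by ring] at this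
      linarith
    · rw [abs_of_nonpos (by linarith)] at hm
      have := binEntropy_subadd (y := 1 - y) (d := y - x) (by linarith [hy.2]) (by linarith) (by linarith [hx.1])
      rw [show 1 - y + (y - x) = 1 - x by ring, Real.binEntropy_one_sub, Real.binEntropy_one_sub] at this
      rw [neg_sub] at hm
      linarith
  · rw [min_eq_right (by linarith)]
    rw [show (1/2:ℝ) = 2⁻¹ by norm_num, Real.binEntropy_two_inv]
    have := Real.binEntropy_le_log_two (p := x)
    linarith

open Classical in
lemma sum_half {n : ℕ} (f : Fin n → Fin n → ℝ) (hs : ∀ u v, f u v = f v u) (h0 : ∀ u, f u u = 0) :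
    ∑ e : {p : Fin n × Fin n // p.1 < p.2}, f e.1.1 e.1.2 = (∑ u, ∑ v, f u v) / 2 := by
  have h1 : ∑ e : {p : Fin n × Fin n // p.1 < p.2}, f e.1.1 e.1.2 = ∑ u, ∑ v, if u < v then f u v else 0 := by
    rw [← Fintype.sum_prod_type', ← Finset.sum_filter]
    symm
    apply Finset.sum_subtype (p := fun p : Fin n × Fin n => p.1 < p.2) (f := fun p : Fin n × Fin n => f p.1 p.2)
    simp
  have h2 : ∑ u, ∑ v, f u v = ∑ u, ∑ v, (if u < v then f u v else 0) + ∑ u, ∑ v, (if v < u then f v u else 0) := by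
    rw [← Finset.sum_add_distrib]
    refine Finset.sum_congr rfl fun u _ => ?_
    rw [← Finset.sum_add_distrib]
    refine Finset.sum_congr rfl fun v _ => ?_
    rcases lt_trichotomy u v with h | h | h
    · simp [h, h.le.not_gt]
    · subst h; simp [h0]
    · simp [h, h.le.not_gt, hs u v]
  rw [h1, h2, Finset.sum_comm (f := fun u v => if v < u then f v u else 0)]; ring

open Classical in
/-- The family of graphs compatible with a fixed fractional overlay is small. -/
lemma cell_count {n k : ℕ} (hn : 1 ≤ n) (hk : 1 ≤ k) (T : Finset (SimpleGraph (Fin n))) (hT : T.Nonempty)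
    (a : Fin n → Fin k → ℝ) (ha : ∀ u i, 0 ≤ a u i) (ha1 : ∀ u, ∑ i, a u i = 1)
    (ha2 : ∀ i, ∑ u, a u i = n / k) (w : Fin k → Fin k → ℝ) (hw : ∀ i j, w i j ∈ Set.Icc (0:ℝ) 1) (η : ℝ)
    (hG : ∀ G ∈ T, ∀ i j, |∑ u, ∑ v, a u i * a v j * (if G.Adj u v then 1 else 0) - n^2/k^2 * w i j| ≤ η * n^2) :
    Real.log (T.card : ℝ) ≤ n^2/2 * ((1/k^2) * ∑ i, ∑ j, Real.binEntropy (w i j) +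
      Real.binEntropy (min (k^2*η) (1/2))) := by
  have hn' : (0:ℝ) < n := by exact_mod_cast hn
  have hk' : (0:ℝ) < k := by exact_mod_cast hk
  have hc' : (0:ℝ) < T.card := by exact_mod_cast hT.card_pos
  set p : Fin n → Fin n → ℝ := fun u v => ((T.filter (fun G => G.Adj u v)).card : ℝ) / T.card with hp
  have hp01 : ∀ u v, p u v ∈ Set.Icc (0:ℝ) 1 := by
    intro u v
    refine ⟨by positivity, ?_⟩
    simp only [hp]
    rw [div_le_one hc']
    exact_mod_cast Finset.card_filter_le _ _
  -- step 1
  have h1 : Real.log (T.card : ℝ) ≤ (∑ u, ∑ v, Real.binEntropy (p u v)) / 2 := by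
    let φ : SimpleGraph (Fin n) → ({p : Fin n × Fin n // p.1 < p.2} → Bool) := fun G e => decide (G.Adj e.1.1 e.1.2)
    have hφ : Function.Injective φ := by
      intro G H hGH
      have key : ∀ u v, u < v → (G.Adj u v ↔ H.Adj u v) := by
        intro u v huv
        have := congrFun hGH ⟨(u,v), huv⟩
        simpa [φ] using this
      ext u v
      rcases lt_trichotomy u v with h | h | h
      · exact key u v h
      · subst h; simp
      · rw [G.adj_comm, H.adj_comm]; exact key v u h
    have := ent_count (T.image φ) (hT.image φ)
    rw [Finset.card_image_of_injective _ hφ] at this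
    have h3 : ∀ e, ((T.image φ).filter (fun f => f e = true)).card = (T.filter (fun G => G.Adj e.1.1 e.1.2)).card := by
      intro e
      rw [Finset.filter_image, Finset.card_image_of_injective _ hφ]
      simp [φ]
    simp only [h3] at this
    refine this.trans (le_of_eq ?_)
    apply sum_half (fun u v => Real.binEntropy (p u v))
    · intro u v; simp only [hp, SimpleGraph.adj_comm]
    · intro u; simp [hp]
  -- step 2
  have hA : ∀ i j, ∑ q : Fin n × Fin n, (k^2/n^2 : ℝ) * (a q.1 i * a q.2 j) = 1 := by
    intro i j
    rw [← Finset.mul_sum, Fintype.sum_prod_type]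
    simp only [← Finset.mul_sum, ← Finset.sum_mul, ha2]
    field_simp
  let q : Fin k → Fin k → ℝ := fun i j => ∑ e : Fin n × Fin n, ((k^2/n^2 : ℝ) * (a e.1 i * a e.2 j)) * p e.1 e.2
  have hq01 : ∀ i j, q i j ∈ Set.Icc (0:ℝ) 1 := by
    intro i j
    have := (convex_Icc (0:ℝ) 1).sum_mem (t := Finset.univ) (w := fun e : Fin n × Fin n => (k^2/n^2 : ℝ) * (a e.1 i * a e.2 j))
      (z := fun e => p e.1 e.2) (fun e _ => mul_nonneg (by positivity) (mul_nonneg (ha _ _) (ha _ _))) (hA i j) (fun e _ => hp01 _ _)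
    simpa [q] using this
  have hJ : ∀ i j, ∑ e : Fin n × Fin n, ((k^2/n^2 : ℝ) * (a e.1 i * a e.2 j)) * Real.binEntropy (p e.1 e.2) ≤ Real.binEntropy (q i j) := by
    intro i j
    have := Real.strictConcave_binEntropy.concaveOn.le_map_sum (t := Finset.univ) (w := fun e : Fin n × Fin n => (k^2/n^2 : ℝ) * (a e.1 i * a e.2 j))
      (p := fun e => p e.1 e.2) (fun e _ => mul_nonneg (by positivity) (mul_nonneg (ha _ _) (ha _ _))) (hA i j) (fun e _ => hp01 _ _)
    simpa [q] using this
  have hqw : ∀ i j, |q i j - w i j| ≤ k^2 * η := by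
    intro i j
    have e1 : q i j = (k^2/n^2 : ℝ) * ((∑ G ∈ T, ∑ u, ∑ v, a u i * a v j * (if G.Adj u v then 1 else 0)) / T.card) := by
      have e0 : ∑ G ∈ T, ∑ u, ∑ v, a u i * a v j * (if G.Adj u v then (1:ℝ) else 0) =
          ∑ u, ∑ v, a u i * a v j * ((T.filter (fun G => G.Adj u v)).card : ℝ) := by
        rw [Finset.sum_comm]
        refine Finset.sum_congr rfl fun u _ => ?_
        rw [Finset.sum_comm]
        refine Finset.sum_congr rfl fun v _ => ?_
        rw [← Finset.mul_sum]
        simp only [Finset.sum_boole]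
      rw [e0, Finset.sum_div, Finset.mul_sum]
      simp only [q, hp]
      rw [Fintype.sum_prod_type]
      refine Finset.sum_congr rfl fun u _ => ?_
      rw [Finset.sum_div, Finset.mul_sum]
      refine Finset.sum_congr rfl fun v _ => ?_
      ring
    have e2 : q i j - w i j = (k^2/n^2 : ℝ) * ((∑ G ∈ T, (∑ u, ∑ v, a u i * a v j * (if G.Adj u v then 1 else 0) - n^2/k^2 * w i j)) / T.card) := by
      rw [e1, Finset.sum_sub_distrib, Finset.sum_const, nsmul_eq_mul]
      field_simp
    rw [e2, abs_mul, abs_of_nonneg (by positivity : (0:ℝ) ≤ k^2/n^2), abs_div, abs_of_pos hc']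
    have e3 : |∑ G ∈ T, (∑ u, ∑ v, a u i * a v j * (if G.Adj u v then 1 else 0) - n^2/k^2 * w i j)| ≤ T.card * (η * n^2) := by
      refine (Finset.abs_sum_le_sum_abs _ _).trans ?_
      refine (Finset.sum_le_card_nsmul _ _ _ (fun G h => hG G h i j)).trans ?_
      simp
    calc _ ≤ (k^2/n^2 : ℝ) * ((T.card * (η * n^2)) / T.card) := by gcongr
      _ = _ := by field_simp
  have hsum : ∑ u, ∑ v, Real.binEntropy (p u v) = (n^2/k^2 : ℝ) * ∑ i, ∑ j, ∑ e : Fin n × Fin n, ((k^2/n^2 : ℝ) * (a e.1 i * a e.2 j)) * Real.binEntropy (p e.1 e.2) := by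
    have : ∀ e : Fin n × Fin n, ∑ i, ∑ j, (a e.1 i * a e.2 j) = 1 := by
      intro e; simp only [← Finset.mul_sum, ha1, mul_one]
    have e1 : ∑ i, ∑ j, ∑ e : Fin n × Fin n, ((k^2/n^2 : ℝ) * (a e.1 i * a e.2 j)) * Real.binEntropy (p e.1 e.2)
       = ∑ e : Fin n × Fin n, (k^2/n^2 : ℝ) * (∑ i, ∑ j, (a e.1 i * a e.2 j)) * Real.binEntropy (p e.1 e.2) := by
      simp only [Finset.mul_sum, Finset.sum_mul]
      symm
      rw [Finset.sum_comm]
      refine Finset.sum_congr rfl fun i _ => ?_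
      rw [Finset.sum_comm]
    rw [e1]
    simp only [this, mul_one]
    rw [← Finset.mul_sum, Fintype.sum_prod_type]
    field_simp
  have h4 : ∑ i, ∑ j, ∑ e : Fin n × Fin n, ((k^2/n^2 : ℝ) * (a e.1 i * a e.2 j)) * Real.binEntropy (p e.1 e.2)
      ≤ ∑ i, ∑ j, Real.binEntropy (w i j) + k^2 * Real.binEntropy (min (k^2*η) (1/2)) := by
    calc _ ≤ ∑ i : Fin k, ∑ j : Fin k, (Real.binEntropy (w i j) + Real.binEntropy (min (k^2*η) (1/2))) := by
          refine Finset.sum_le_sum fun i _ => Finset.sum_le_sum fun j _ => ?_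
          exact (hJ i j).trans (binEntropy_perturb (hq01 i j) (hw i j) (hqw i j))
      _ = _ := by simp [Finset.sum_add_distrib]; ring
  calc _ ≤ _ := h1
    _ ≤ (n^2/k^2 : ℝ) * (∑ i, ∑ j, Real.binEntropy (w i j) + k^2 * Real.binEntropy (min (k^2*η) (1/2))) / 2 := by
      rw [hsum]; gcongr
    _ = _ := by field_simp

open Classical in
/-- The graphs having an approximate fractional overlay. -/
lemma overlay_count {n k M : ℕ} (hn : 1 ≤ n) (hk : 1 ≤ k) (hM : 1 ≤ M) (T : Finset (SimpleGraph (Fin n))) (hT : T.Nonempty)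
    (w : Fin k → Fin k → ℝ) (hw : ∀ i j, w i j ∈ Set.Icc (0:ℝ) 1) (η : ℝ)
    (hG : ∀ G ∈ T, ∃ a : Fin n → Fin k → ℝ, (∀ u i, 0 ≤ a u i) ∧ (∀ u, ∑ i, a u i = 1) ∧
      (∀ i, ∑ u, a u i = n / k) ∧
      ∀ i j, |∑ u, ∑ v, a u i * a v j * (if G.Adj u v then 1 else 0) - n^2/k^2 * w i j| ≤ η * n^2) :
    Real.log (T.card : ℝ) ≤ n * k * Real.log (M + 1) + n^2/2 * ((1/k^2) * ∑ i, ∑ j, Real.binEntropy (w i j) +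
      Real.binEntropy (min (k^2*(η + 2 / M)) (1/2))) := by
  have hM' : (0:ℝ) < M := by exact_mod_cast hM
  choose! a ha0 ha1 ha2 haG using hG
  have hale : ∀ G ∈ T, ∀ u i, a G u i ≤ 1 := by
    intro G hG u i
    rw [← ha1 G hG u]
    exact Finset.single_le_sum (f := fun i => a G u i) (fun i _ => ha0 G hG u i) (Finset.mem_univ i)
  let c : SimpleGraph (Fin n) → (Fin n → Fin k → Fin (M+1)) := fun G u i => Fin.ofNat (M+1) ⌊M * a G u i⌋₊
  have hcv : ∀ G ∈ T, ∀ u i, ((c G u i : ℕ)) = ⌊M * a G u i⌋₊ := by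
    intro G hG u i
    simp only [c, Fin.ofNat]
    apply Nat.mod_eq_of_lt
    have : ⌊M * a G u i⌋₊ ≤ M := by
      apply Nat.floor_le_of_le
      have := hale G hG u i
      nlinarith
    omega
  have hclose : ∀ G ∈ T, ∀ H ∈ T, c G = c H → ∀ u i, |a G u i - a H u i| ≤ 1 / M := by
    intro G hG H hH hc u i
    have h1 : ⌊M * a G u i⌋₊ = ⌊M * a H u i⌋₊ := by rw [← hcv G hG, ← hcv H hH, hc]
    have g1 := Nat.floor_le (mul_nonneg hM'.le (ha0 G hG u i))
    have g2 := Nat.lt_floor_add_one (M * a G u i)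
    have g3 := Nat.floor_le (mul_nonneg hM'.le (ha0 H hH u i))
    have g4 := Nat.lt_floor_add_one (M * a H u i)
    rw [h1] at g1 g2
    rw [le_div_iff₀ hM', ← abs_of_pos hM', ← abs_mul, abs_le]
    constructor <;> linarith
  set B : ℝ := n^2/2 * ((1/k^2) * ∑ i, ∑ j, Real.binEntropy (w i j) +
      Real.binEntropy (min (k^2*(η + 2 / M)) (1/2))) with hB
  have hcell : ∀ b, ((T.filter (fun G => c G = b)).card : ℝ) ≤ Real.exp B := by
    intro b
    rcases (T.filter (fun G => c G = b)).eq_empty_or_nonempty with h | h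
    · rw [h]; simp [Real.exp_nonneg]
    have hpos : (0:ℝ) < (T.filter (fun G => c G = b)).card := by exact_mod_cast h.card_pos
    rw [← Real.log_le_iff_le_exp hpos]
    obtain ⟨H, hH⟩ := id h
    rw [Finset.mem_filter] at hH
    obtain ⟨hHT, hHb⟩ := hH
    refine cell_count hn hk _ h (a H) (ha0 H hHT) (ha1 H hHT) (ha2 H hHT) w hw _ ?_
    intro G hG i j
    rw [Finset.mem_filter] at hG
    obtain ⟨hGT, hGb⟩ := hG
    have hcl := hclose G hGT H hHT (hGb.trans hHb.symm)
    have h1 := haG G hGT i j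
    have h2 : |∑ u, ∑ v, a H u i * a H v j * (if G.Adj u v then (1:ℝ) else 0) - ∑ u, ∑ v, a G u i * a G v j * (if G.Adj u v then 1 else 0)| ≤ n * (n * (2 / M)) := by
      rw [← Finset.sum_sub_distrib]
      refine (Finset.abs_sum_le_sum_abs _ _).trans ?_
      refine (Finset.sum_le_card_nsmul _ _ (n * (2/M) : ℝ) (fun u _ => ?_)).trans (by simp)
      rw [← Finset.sum_sub_distrib]
      refine (Finset.abs_sum_le_sum_abs _ _).trans ?_
      refine (Finset.sum_le_card_nsmul _ _ (2/M : ℝ) (fun v _ => ?_)).trans (by simp)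
      have c1 := abs_le.mp (hcl u i)
      have c2 := abs_le.mp (hcl v j)
      have hMi : (0:ℝ) < 1 / M := by positivity
      have l1 := hale G hGT u i
      have l2 := hale H hHT v j
      have l3 := ha0 G hGT u i
      have l4 := ha0 H hHT v j
      split_ifs
      · have : a H u i * a H v j * 1 - a G u i * a G v j * 1 = -((a G u i - a H u i) * a H v j + a G u i * (a G v j - a H v j)) := by ring
        rw [this, abs_neg]
        refine (abs_add_le _ _).trans ?_
        rw [abs_mul, abs_mul, abs_of_nonneg l3, abs_of_nonneg l4]
        have m1 : |a G u i - a H u i| * a H v j ≤ 1 / M * 1 := by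
          apply mul_le_mul (hcl u i) l2 l4 hMi.le
        have m2 : a G u i * |a G v j - a H v j| ≤ 1 * (1 / M) := by
          apply mul_le_mul l1 (hcl v j) (abs_nonneg _) zero_le_one
        have : (2 / M : ℝ) = 1/M*1 + 1*(1/M) := by ring
        linarith
      · simp only [mul_zero, sub_zero, abs_zero]; positivity
    have h3 := abs_add_le (∑ u, ∑ v, a H u i * a H v j * (if G.Adj u v then (1:ℝ) else 0) - ∑ u, ∑ v, a G u i * a G v j * (if G.Adj u v then 1 else 0)) (∑ u, ∑ v, a G u i * a G v j * (if G.Adj u v then 1 else 0) - n^2/k^2 * w i j)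
    rw [sub_add_sub_cancel] at h3
    calc _ ≤ _ := h3
      _ ≤ n * (n * (2 / M)) + η * n^2 := add_le_add h2 h1
      _ = _ := by ring
  have hTpos : (0:ℝ) < T.card := by exact_mod_cast hT.card_pos
  have hcard : (T.card : ℝ) ≤ ((M+1:ℝ)^(k))^n * Real.exp B := by
    rw [Finset.card_eq_sum_card_fiberwise (f := c) (t := Finset.univ) (fun _ _ => Finset.mem_coe.2 (Finset.mem_univ _))]
    push_cast
    refine (Finset.sum_le_card_nsmul _ _ _ (fun b _ => hcell b)).trans ?_
    simp
  have := Real.log_le_log hTpos hcard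
  rw [Real.log_mul (by positivity) (Real.exp_pos _).ne', Real.log_exp, Real.log_pow, Real.log_pow] at this
  linarith

lemma sum_partition {ι : Type*} [Fintype ι] (μ : Measure ℝ) [IsFiniteMeasure μ] (B : ι → Set ℝ)
    (hB : ∀ i, MeasurableSet (B i)) (hd : Pairwise (Function.onFun Disjoint B))
    (hc : μ (⋃ i, B i)ᶜ = 0) (A : Set ℝ) (hA : MeasurableSet A) :
    ∑ i, μ.real (A ∩ B i) = μ.real A := by
  rw [← measureReal_iUnion_fintype (fun i j hij => (hd hij).mono inter_subset_right inter_subset_right)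
    (fun i => hA.inter (hB i)), ← inter_iUnion]
  apply measureReal_congr
  have : (⋃ i, B i) =ᵐ[μ] univ := by rw [ae_eq_univ]; exact hc
  simpa using (ae_eq_refl A).inter this

/-- Lebesgue measure on the unit interval. -/
def mu01 : Measure ℝ := volume.restrict (Icc (0:ℝ) 1)

instance : IsProbabilityMeasure mu01 := by
  unfold mu01; constructor; simp

lemma setInt_mu01 (S T : Set ℝ) (hS : MeasurableSet S) (hT : MeasurableSet T) (f : ℝ × ℝ → ℝ) :
    ∫ p in (Icc 0 1 ∩ S) ×ˢ (Icc 0 1 ∩ T), f p = ∫ p in S ×ˢ T, f p ∂(mu01.prod mu01) := by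
  rw [Measure.volume_eq_prod, ← Measure.prod_restrict, ← Measure.prod_restrict]
  unfold mu01
  rw [Measure.restrict_restrict hS, Measure.restrict_restrict hT, inter_comm, inter_comm _ T]

/-- The part of the unit interval representing the vertex `u`. -/
def vset (n : ℕ) (u : Fin n) : Set ℝ := {x | ⌈(n : ℝ) * x⌉ = ((u : ℕ) : ℤ) + 1}

lemma vset_eq {n : ℕ} (hn : 1 ≤ n) (u : Fin n) : vset n u = Ioc (((u:ℕ):ℝ)/n) ((((u:ℕ):ℝ)+1)/n) := by
  have hn' : (0:ℝ) < n := by exact_mod_cast hn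
  ext x
  simp only [vset, mem_ofPred_eq, mem_Ioc, Int.ceil_eq_iff]
  push_cast
  rw [div_lt_iff₀ hn', le_div_iff₀ hn', mul_comm x]
  simp

lemma vset_disj (n : ℕ) : Pairwise (Function.onFun Disjoint (vset n)) := by
  intro u v huv
  rw [Function.onFun, Set.disjoint_left]
  intro x hx hy
  simp only [vset, mem_ofPred_eq] at hx hy
  apply huv
  ext
  omega

lemma vset_meas {n : ℕ} (hn : 1 ≤ n) (u : Fin n) : MeasurableSet (vset n u) := by
  rw [vset_eq hn]; exact measurableSet_Ioc

lemma vset_mu {n : ℕ} (hn : 1 ≤ n) (u : Fin n) : mu01.real (vset n u) = 1 / n := by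
  have hn' : (0:ℝ) < n := by exact_mod_cast hn
  have hu : ((u:ℕ):ℝ) + 1 ≤ n := by exact_mod_cast u.2
  have hsub : vset n u ⊆ Icc 0 1 := by
    rw [vset_eq hn]
    intro x hx
    refine ⟨le_trans (by positivity) hx.1.le, hx.2.trans ?_⟩
    rwa [div_le_one hn']
  unfold mu01
  rw [measureReal_restrict_apply (vset_meas hn u), inter_eq_left.mpr hsub, vset_eq hn, Real.volume_real_Ioc]
  rw [← sub_div, add_sub_cancel_left, max_eq_left (by positivity)]

lemma vset_cover {n : ℕ} (hn : 1 ≤ n) : mu01 (⋃ u, vset n u)ᶜ = 0 := by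
  have hn' : (0:ℝ) < n := by exact_mod_cast hn
  unfold mu01
  rw [Measure.restrict_apply (MeasurableSet.iUnion (vset_meas hn)).compl]
  refine measure_mono_null (t := {0}) ?_ (by simp)
  rintro x ⟨hx, hx0, hx1⟩
  by_contra hne
  have hpos : 0 < x := lt_of_le_of_ne hx0 (Ne.symm hne)
  apply hx
  have c1 : 0 < ⌈(n:ℝ) * x⌉ := Int.ceil_pos.mpr (by positivity)
  have c2 : ⌈(n:ℝ) * x⌉ ≤ n := Int.ceil_le.mpr (by push_cast; nlinarith)
  refine mem_iUnion.mpr ⟨⟨(⌈(n:ℝ) * x⌉ - 1).toNat, by omega⟩, ?_⟩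
  simp only [vset, mem_ofPred_eq]
  omega

open Classical in
lemma graphonOfGraph_eq {n : ℕ} (G : SimpleGraph (Fin n)) (x y : ℝ) :
    graphonOfGraph G x y = ∑ u, ∑ v, (if G.Adj u v then 1 else 0) *
      ((vset n u) ×ˢ (vset n v)).indicator (1 : ℝ × ℝ → ℝ) (x, y) := by
  unfold graphonOfGraph
  have huniq : ∀ u v : Fin n, ∀ z : ℝ, z ∈ vset n u → z ∈ vset n v → u = v := by
    intro u v z h1 h2
    by_contra h
    exact Set.disjoint_left.mp (vset_disj n h) h1 h2
  split_ifs with h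
  · obtain ⟨i, j, hij, hi, hj⟩ := h
    have hi : x ∈ vset n i := hi
    have hj : y ∈ vset n j := hj
    rw [Finset.sum_eq_single i, Finset.sum_eq_single j]
    · simp [hij, hi, hj]
    · intro v _ hv
      have : y ∉ vset n v := fun h => hv (huniq _ _ _ h hj)
      simp [this]
    · simp
    · intro u _ hu
      have : x ∉ vset n u := fun h => hu (huniq _ _ _ h hi)
      simp [this]
    · simp
  · symm
    refine Finset.sum_eq_zero fun u _ => Finset.sum_eq_zero fun v _ => ?_
    by_cases hA : G.Adj u v
    · have : (x, y) ∉ (vset n u) ×ˢ (vset n v) := fun hm => h ⟨u, v, hA, hm.1, hm.2⟩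
      simp only [indicator_of_notMem this, mul_zero]
    · simp [hA]

lemma graphonOfGraph_mem {n : ℕ} (G : SimpleGraph (Fin n)) (x y : ℝ) :
    graphonOfGraph G x y ∈ Icc (0:ℝ) 1 := by
  unfold graphonOfGraph; split_ifs <;> simp

lemma le_cutNorm (U : ℝ → ℝ → ℝ) (hU : ∀ x y, |U x y| ≤ 1) (S T : Set ℝ) (hS : MeasurableSet S)
    (hT : MeasurableSet T) (hS1 : S ⊆ Icc 0 1) (hT1 : T ⊆ Icc 0 1) :
    |∫ p in S ×ˢ T, U p.1 p.2| ≤ cutNorm U := by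
  unfold cutNorm
  refine le_csSup ⟨1, ?_⟩ ⟨S, T, hS, hT, hS1, hT1, rfl⟩
  rintro r ⟨S, T, hS, hT, hS1, hT1, rfl⟩
  have hle : (volume : Measure (ℝ × ℝ)) (S ×ˢ T) ≤ 1 := by
    rw [Measure.volume_eq_prod, Measure.prod_prod]
    have h1 : volume S ≤ 1 := (measure_mono hS1).trans (by simp)
    have h2 : volume T ≤ 1 := (measure_mono hT1).trans (by simp)
    exact mul_le_one' h1 h2
  have := norm_setIntegral_le_of_norm_le_const (μ := (volume : Measure (ℝ × ℝ))) (s := S ×ˢ T)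
    (f := fun p => U p.1 p.2) (C := 1) (hle.trans_lt ENNReal.one_lt_top) (fun p _ => hU _ _)
  rw [Real.norm_eq_abs] at this
  refine this.trans ?_
  rw [one_mul]
  exact ENNReal.toReal_le_of_le_ofReal zero_le_one (by simpa using hle)

section
variable (k : ℕ)

lemma P_mu (P : Fin k → Set ℝ) (hmeas : ∀ i, MeasurableSet (P i))
    (hcover : (⋃ i, P i) = Set.Icc (0:ℝ) 1)
    (hsize : ∀ i, MeasureTheory.volume (P i) = 1 / (k : ENNReal)) (i : Fin k) :
    mu01.real (P i) = 1 / k := by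
  have hsub : P i ⊆ Icc 0 1 := hcover ▸ subset_iUnion P i
  unfold mu01
  rw [measureReal_restrict_apply (hmeas i), inter_eq_left.mpr hsub, Measure.real, hsize]
  simp

lemma avg_eq (W : ℝ → ℝ → ℝ) (P : Fin k → Set ℝ) (hmeas : ∀ i, MeasurableSet (P i))
    (hcover : (⋃ i, P i) = Set.Icc (0:ℝ) 1)
    (hsize : ∀ i, MeasureTheory.volume (P i) = 1 / (k : ENNReal)) (i j : Fin k) :
    ⨍ p in (P i) ×ˢ (P j), W p.1 p.2 = k^2 * ∫ p in (P i) ×ˢ (P j), W p.1 p.2 ∂(mu01.prod mu01) := by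
  have hsub : ∀ i, P i ⊆ Icc 0 1 := fun i => hcover ▸ subset_iUnion P i
  rw [setAverage_eq, ← setInt_mu01 _ _ (hmeas i) (hmeas j), inter_eq_right.mpr (hsub i),
    inter_eq_right.mpr (hsub j), Measure.volume_eq_prod, measureReal_prod_prod, Measure.real, Measure.real,
    hsize, hsize, smul_eq_mul]
  simp [sq]

lemma avg_mem (W : ℝ → ℝ → ℝ) (hW : IsGraphon W) (hk : 1 ≤ k) (P : Fin k → Set ℝ) (hmeas : ∀ i, MeasurableSet (P i))
    (hcover : (⋃ i, P i) = Set.Icc (0:ℝ) 1)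
    (hsize : ∀ i, MeasureTheory.volume (P i) = 1 / (k : ENNReal)) (i j : Fin k) :
    ⨍ p in (P i) ×ˢ (P j), W p.1 p.2 ∈ Icc (0:ℝ) 1 := by
  have hk' : (0:ℝ) < k := by exact_mod_cast hk
  rw [avg_eq k W P hmeas hcover hsize]
  have h0 : 0 ≤ ∫ p in (P i) ×ˢ (P j), W p.1 p.2 ∂(mu01.prod mu01) :=
    integral_nonneg fun p => (hW.2.2 _ _).1
  refine ⟨by positivity, ?_⟩
  have := norm_setIntegral_le_of_norm_le_const (μ := mu01.prod mu01) (s := (P i) ×ˢ (P j))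
    (f := fun p => W p.1 p.2) (C := 1) (measure_lt_top _ _)
    (fun p _ => by rw [Real.norm_eq_abs, abs_of_nonneg (hW.2.2 _ _).1]; exact (hW.2.2 _ _).2)
  rw [Real.norm_eq_abs, abs_of_nonneg h0, measureReal_prod_prod, P_mu k P hmeas hcover hsize,
    P_mu k P hmeas hcover hsize] at this
  calc _ ≤ (k:ℝ)^2 * (1 * (1/k * (1/k))) := by gcongr
    _ = 1 := by field_simp

open Classical in
lemma exists_overlay (W : ℝ → ℝ → ℝ) (hW : IsGraphon W) (hk : 1 ≤ k) (δ : ℝ) (hδ : 0 < δ)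
    (P : Fin k → Set ℝ) (hmeas : ∀ i, MeasurableSet (P i))
    (hdisj : Pairwise (Function.onFun Disjoint P))
    (hcover : (⋃ i, P i) = Set.Icc (0:ℝ) 1)
    (hsize : ∀ i, MeasureTheory.volume (P i) = 1 / (k : ENNReal)) {n : ℕ} (hn : 1 ≤ n)
    (G : SimpleGraph (Fin n)) (hG : deltaCut (graphonOfGraph G) W ≤ δ) :
    ∃ a : Fin n → Fin k → ℝ, (∀ u i, 0 ≤ a u i) ∧ (∀ u, ∑ i, a u i = 1) ∧
      (∀ i, ∑ u, a u i = n / k) ∧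
      ∀ i j, |∑ u, ∑ v, a u i * a v j * (if G.Adj u v then 1 else 0) -
        n^2/k^2 * ⨍ p in (P i) ×ˢ (P j), W p.1 p.2| ≤ (2 * δ) * n^2 := by
  have hk' : (0:ℝ) < k := by exact_mod_cast hk
  have hn' : (0:ℝ) < n := by exact_mod_cast hn
  have hid : IsMPSelf id := ⟨MeasurePreserving.id _, fun x hx => hx⟩
  have hlt : deltaCut (graphonOfGraph G) W < 2 * δ := lt_of_le_of_lt hG (by linarith)
  unfold deltaCut at hlt
  obtain ⟨r, ⟨σ₁, σ₂, h1, h2, rfl⟩, hr⟩ := exists_lt_of_csInf_lt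
    (by exact ⟨_, id, id, hid, hid, rfl⟩) hlt
  have m1 : MeasurePreserving σ₁ mu01 mu01 := h1.1
  have m2 : MeasurePreserving σ₂ mu01 mu01 := h2.1
  have hA : ∀ u, MeasurableSet (σ₁ ⁻¹' vset n u) := fun u => m1.measurable (vset_meas hn u)
  have hB : ∀ i, MeasurableSet (σ₂ ⁻¹' P i) := fun i => m2.measurable (hmeas i)
  refine ⟨fun u i => n * mu01.real (σ₁ ⁻¹' vset n u ∩ σ₂ ⁻¹' P i), fun u i => by positivity, ?_, ?_, ?_⟩
  · intro u
    rw [← Finset.mul_sum, sum_partition mu01 (fun i => σ₂ ⁻¹' P i) hB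
      (fun i j hij => (hdisj hij).preimage σ₂) _ _ (hA u)]
    · rw [m1.measureReal_preimage (vset_meas hn u).nullMeasurableSet, vset_mu hn]
      field_simp
    · rw [← preimage_iUnion, ← preimage_compl, m2.measure_preimage
        (MeasurableSet.iUnion hmeas).compl.nullMeasurableSet, hcover]
      simp [mu01]
  · intro i
    rw [← Finset.mul_sum]
    simp only [inter_comm _ (σ₂ ⁻¹' P i)]
    rw [sum_partition mu01 (fun u => σ₁ ⁻¹' vset n u) hA
      (fun i j hij => (vset_disj n hij).preimage σ₁) _ _ (hB i)]
    · rw [m2.measureReal_preimage (hmeas i).nullMeasurableSet, P_mu k P hmeas hcover hsize]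
      field_simp
    · rw [← preimage_iUnion, ← preimage_compl, m1.measure_preimage
        (MeasurableSet.iUnion (vset_meas hn)).compl.nullMeasurableSet, vset_cover hn]
  · intro i j
    have hcut := le_cutNorm (fun x y => graphonOfGraph G (σ₁ x) (σ₁ y) - W (σ₂ x) (σ₂ y))
      (fun x y => by
        have g1 := graphonOfGraph_mem G (σ₁ x) (σ₁ y)
        have g2 := hW.2.2 (σ₂ x) (σ₂ y)
        rw [abs_le]; constructor <;> linarith [g1.1, g1.2, g2.1, g2.2])
      (Icc 0 1 ∩ σ₂ ⁻¹' P i) (Icc 0 1 ∩ σ₂ ⁻¹' P j)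
      (measurableSet_Icc.inter (hB i)) (measurableSet_Icc.inter (hB j)) inter_subset_left inter_subset_left
    rw [setInt_mu01 _ _ (hB i) (hB j)] at hcut
    have hind : ∀ u v, Integrable (fun p : ℝ × ℝ => (if G.Adj u v then (1:ℝ) else 0) *
        ((σ₁ ⁻¹' vset n u) ×ˢ (σ₁ ⁻¹' vset n v)).indicator (1 : ℝ × ℝ → ℝ) p)
        ((mu01.prod mu01).restrict ((σ₂ ⁻¹' P i) ×ˢ (σ₂ ⁻¹' P j))) := by
      intro u v
      apply Integrable.const_mul
      exact (integrable_const (1:ℝ)).indicator ((hA u).prod (hA v))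
    have hGe : (fun p : ℝ × ℝ => graphonOfGraph G (σ₁ p.1) (σ₁ p.2)) = fun p =>
        ∑ u, ∑ v, (if G.Adj u v then (1:ℝ) else 0) *
        ((σ₁ ⁻¹' vset n u) ×ˢ (σ₁ ⁻¹' vset n v)).indicator (1 : ℝ × ℝ → ℝ) p := by
      ext p
      rw [graphonOfGraph_eq]
      rfl
    have hGi : Integrable (fun p : ℝ × ℝ => graphonOfGraph G (σ₁ p.1) (σ₁ p.2))
        ((mu01.prod mu01).restrict ((σ₂ ⁻¹' P i) ×ˢ (σ₂ ⁻¹' P j))) := by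
      rw [hGe]
      exact integrable_finsetSum _ fun u _ => integrable_finsetSum _ fun v _ => hind u v
    have hGint : ∫ p in (σ₂ ⁻¹' P i) ×ˢ (σ₂ ⁻¹' P j), graphonOfGraph G (σ₁ p.1) (σ₁ p.2) ∂(mu01.prod mu01)
        = ∑ u, ∑ v, (if G.Adj u v then (1:ℝ) else 0) *
          (mu01.real (σ₁ ⁻¹' vset n u ∩ σ₂ ⁻¹' P i) * mu01.real (σ₁ ⁻¹' vset n v ∩ σ₂ ⁻¹' P j)) := by
      rw [hGe, integral_finsetSum _ fun u _ => integrable_finsetSum _ fun v _ => hind u v]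
      refine Finset.sum_congr rfl fun u _ => ?_
      rw [integral_finsetSum _ fun v _ => hind u v]
      refine Finset.sum_congr rfl fun v _ => ?_
      rw [integral_const_mul, integral_indicator_one ((hA u).prod (hA v)),
        measureReal_restrict_apply ((hA u).prod (hA v)), prod_inter_prod, measureReal_prod_prod]
    have mm := m2.prod m2
    have hWm : Measurable (fun p : ℝ × ℝ => W p.1 p.2) := hW.2.1
    have hWint : ∫ p in (σ₂ ⁻¹' P i) ×ˢ (σ₂ ⁻¹' P j), W (σ₂ p.1) (σ₂ p.2) ∂(mu01.prod mu01)
        = ∫ p in (P i) ×ˢ (P j), W p.1 p.2 ∂(mu01.prod mu01) := by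
      conv_rhs => rw [← mm.map_eq]
      rw [setIntegral_map ((hmeas i).prod (hmeas j)) hWm.aestronglyMeasurable mm.measurable.aemeasurable]
      rfl
    have hWi : Integrable (fun p : ℝ × ℝ => W (σ₂ p.1) (σ₂ p.2))
        ((mu01.prod mu01).restrict ((σ₂ ⁻¹' P i) ×ˢ (σ₂ ⁻¹' P j))) := by
      refine Integrable.of_bound (C := 1) (hWm.comp mm.measurable).aestronglyMeasurable ?_
      refine Eventually.of_forall fun p => ?_
      have g2 := hW.2.2 (σ₂ p.1) (σ₂ p.2)
      rw [Real.norm_eq_abs, abs_of_nonneg g2.1]; exact g2.2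
    rw [integral_sub hGi hWi, hGint, hWint] at hcut
    rw [avg_eq k W P hmeas hcover hsize]
    have e1 : ∑ u, ∑ v, n * mu01.real (σ₁ ⁻¹' vset n u ∩ σ₂ ⁻¹' P i) * (n * mu01.real (σ₁ ⁻¹' vset n v ∩ σ₂ ⁻¹' P j)) *
          (if G.Adj u v then (1:ℝ) else 0) = n^2 * ∑ u, ∑ v, (if G.Adj u v then (1:ℝ) else 0) *
          (mu01.real (σ₁ ⁻¹' vset n u ∩ σ₂ ⁻¹' P i) * mu01.real (σ₁ ⁻¹' vset n v ∩ σ₂ ⁻¹' P j)) := by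
      simp only [Finset.mul_sum]
      refine Finset.sum_congr rfl fun u _ => Finset.sum_congr rfl fun v _ => ?_
      ring
    rw [e1]
    have e2 : ∀ x : ℝ, (n:ℝ)^2/k^2 * (k^2 * x) = n^2 * x := fun x => by field_simp
    rw [e2, ← mul_sub, abs_mul, abs_of_nonneg (by positivity : (0:ℝ) ≤ n^2), mul_comm]
    exact mul_le_mul_of_nonneg_right (hcut.trans hr.le) (by positivity)

lemma binEnt_eq (x : ℝ) : binEnt x = Real.binEntropy x / Real.log 2 := by
  unfold binEnt Real.binEntropy Real.logb
  simp only [Real.log_inv]; ring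

lemma graphonEnt_eq (W : ℝ → ℝ → ℝ) (P : Fin k → Set ℝ) (hmeas : ∀ i, MeasurableSet (P i))
    (hdisj : Pairwise (Function.onFun Disjoint P))
    (hcover : (⋃ i, P i) = Set.Icc (0:ℝ) 1)
    (hsize : ∀ i, MeasureTheory.volume (P i) = 1 / (k : ENNReal)) :
    graphonEnt (condExpPart P W) = (1/k^2) * ∑ i, ∑ j, binEnt (⨍ p in (P i) ×ˢ (P j), W p.1 p.2) := by
  classical
  have hpt : ∀ x y, binEnt (condExpPart P W x y) = ∑ i, ∑ j,
      binEnt (⨍ p in (P i) ×ˢ (P j), W p.1 p.2) * (P i).indicator (1 : ℝ → ℝ) x * (P j).indicator (1 : ℝ → ℝ) y := by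
    intro x y
    have huniq : ∀ u v : Fin k, ∀ z : ℝ, z ∈ P u → z ∈ P v → u = v := by
      intro u v z h1 h2
      by_contra h
      exact Set.disjoint_left.mp (hdisj h) h1 h2
    unfold condExpPart
    by_cases hx : ∃ i, x ∈ P i
    · obtain ⟨i, hi⟩ := hx
      by_cases hy : ∃ j, y ∈ P j
      · obtain ⟨j, hj⟩ := hy
        have hxi : ∀ u, x ∈ P u ↔ u = i := fun u => ⟨fun h => huniq _ _ _ h hi, fun h => h ▸ hi⟩
        have hyj : ∀ u, y ∈ P u ↔ u = j := fun u => ⟨fun h => huniq _ _ _ h hj, fun h => h ▸ hj⟩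
        simp [indicator_apply, hxi, hyj, ite_and]
      · push Not at hy
        simp [hy, binEnt]
    · push Not at hx
      simp [hx, binEnt]
  unfold graphonEnt
  simp only [hpt]
  change ∫ x, ∫ y, _ ∂mu01 ∂mu01 = _
  have hI : ∀ j, Integrable ((P j).indicator (1 : ℝ → ℝ)) mu01 := fun j =>
    (integrable_const (1:ℝ)).indicator (hmeas j)
  have hin : ∀ x, ∫ y, (∑ i, ∑ j, binEnt (⨍ p in (P i) ×ˢ (P j), W p.1 p.2) * (P i).indicator (1 : ℝ → ℝ) x *
      (P j).indicator (1 : ℝ → ℝ) y) ∂mu01 = ∑ i, ∑ j, (1/k * binEnt (⨍ p in (P i) ×ˢ (P j), W p.1 p.2)) * (P i).indicator (1 : ℝ → ℝ) x := by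
    intro x
    rw [integral_finsetSum _ fun i _ => integrable_finsetSum _ fun j _ => (hI j).const_mul _]
    refine Finset.sum_congr rfl fun i _ => ?_
    rw [integral_finsetSum _ fun j _ => (hI j).const_mul _]
    refine Finset.sum_congr rfl fun j _ => ?_
    rw [integral_const_mul, integral_indicator_one (hmeas j), P_mu k P hmeas hcover hsize]
    ring
  simp only [hin]
  rw [integral_finsetSum _ fun i _ => integrable_finsetSum _ fun j _ => (hI i).const_mul _, Finset.mul_sum]
  refine Finset.sum_congr rfl fun i _ => ?_
  rw [integral_finsetSum _ fun j _ => (hI i).const_mul _, Finset.mul_sum]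
  refine Finset.sum_congr rfl fun j _ => ?_
  rw [integral_const_mul, integral_indicator_one (hmeas i), P_mu k P hmeas hcover hsize]
  ring
end

theorem stmt7 (W : ℝ → ℝ → ℝ) (hW : IsGraphon W) (k : ℕ) (hk : 1 ≤ k) (δ : ℝ) (hδ : 0 < δ)
    (P : Fin k → Set ℝ) (hmeas : ∀ i, MeasurableSet (P i))
    (hdisj : Pairwise (Function.onFun Disjoint P))
    (hcover : (⋃ i, P i) = Set.Icc (0:ℝ) 1)
    (hsize : ∀ i, MeasureTheory.volume (P i) = 1 / (k : ENNReal)) :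
    Filter.limsup (fun n : ℕ => Real.logb 2 (NCut n δ W : ℝ) / choose2 n) Filter.atTop ≤
      graphonEnt (condExpPart P W) + htilde (4 * (k:ℝ)^2 * δ) := by
  classical
  obtain ⟨M, hM⟩ := exists_nat_gt (1 / δ)
  have hM0 : (0:ℝ) < M := lt_trans (by positivity) hM
  have hM1 : 1 ≤ M := by exact_mod_cast hM0
  have hMδ : 2 / (M:ℝ) ≤ 2 * δ := by
    rw [div_le_iff₀ hM0]
    rw [div_lt_iff₀ hδ] at hM
    linarith
  have hl2 : 0 < Real.log 2 := Real.log_pos one_lt_two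
  have hav := avg_mem k W hW hk P hmeas hcover hsize
  set L : ℝ := graphonEnt (condExpPart P W) + htilde (4 * (k:ℝ)^2 * δ) with hL
  have hLeq : L * Real.log 2 = (1/k^2) * ∑ i, ∑ j, Real.binEntropy (⨍ p in (P i) ×ˢ (P j), W p.1 p.2) +
      Real.binEntropy (min (4 * k^2 * δ) (1/2)) := by
    rw [hL, graphonEnt_eq k W P hmeas hdisj hcover hsize, htilde]
    simp only [binEnt_eq, ← Finset.sum_div]
    field_simp
  have hHmin : ∀ t : ℝ, 0 ≤ t → 0 ≤ Real.binEntropy (min t (1/2)) := fun t ht =>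
    Real.binEntropy_nonneg (le_min ht (by norm_num)) ((min_le_right _ _).trans (by norm_num))
  have hL0 : 0 ≤ L := by
    have : 0 ≤ L * Real.log 2 := by
      rw [hLeq]
      refine add_nonneg (mul_nonneg (by positivity) (Finset.sum_nonneg fun i _ => Finset.sum_nonneg fun j _ =>
        Real.binEntropy_nonneg (hav i j).1 (hav i j).2)) (hHmin _ (by positivity))
    exact nonneg_of_mul_nonneg_left this hl2
  set C : ℝ := k * Real.log (M + 1) / Real.log 2 with hC
  have hlM : 0 ≤ Real.log ((M:ℝ) + 1) := Real.log_nonneg (by linarith)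
  have hC0 : 0 ≤ C := by positivity
  have hbound : ∀ n : ℕ, 2 ≤ n → Real.logb 2 (NCut n δ W : ℝ) / choose2 n ≤
      (2 * C + n * L) / ((n:ℝ) - 1) := by
    intro n hn
    have hn' : (2:ℝ) ≤ n := by exact_mod_cast hn
    have hch : 0 < choose2 n := by unfold choose2; nlinarith
    have hmain : Real.logb 2 (NCut n δ W : ℝ) ≤ n * C + n^2/2 * L := by
      set T : Finset (SimpleGraph (Fin n)) := Finset.univ.filter (fun G => deltaCut (graphonOfGraph G) W ≤ δ) with hT
      have hcard : NCut n δ W = T.card := by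
        unfold NCut
        rw [Nat.card_eq_fintype_card, Fintype.card_subtype]
      rw [hcard]
      rcases T.eq_empty_or_nonempty with he | hne
      · rw [he]; simp; positivity
      have := overlay_count (n := n) (k := k) (M := M) (by omega) hk hM1 T hne
        (fun i j => ⨍ p in (P i) ×ˢ (P j), W p.1 p.2) hav (2 * δ) (fun G hG =>
          exists_overlay k W hW hk δ hδ P hmeas hdisj hcover hsize (by omega) G (Finset.mem_filter.mp hG).2)
      have hmono : Real.binEntropy (min (k^2*(2 * δ + 2 / M)) (1/2)) ≤ Real.binEntropy (min (4 * k^2 * δ) (1/2)) := by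
        apply Real.binEntropy_strictMonoOn.monotoneOn
        · exact ⟨le_min (by positivity) (by norm_num), (min_le_right _ _).trans (by norm_num)⟩
        · exact ⟨le_min (by positivity) (by norm_num), (min_le_right _ _).trans (by norm_num)⟩
        · apply min_le_min _ le_rfl
          calc (k:ℝ)^2*(2 * δ + 2 / M) ≤ k^2 * (2*δ + 2*δ) := by gcongr
            _ = _ := by ring
      rw [Real.logb, div_le_iff₀ hl2]
      calc _ ≤ _ := this
        _ ≤ n * k * Real.log (M + 1) + n^2/2 * (L * Real.log 2) := by
          rw [hLeq]; gcongr
        _ = _ := by rw [hC]; field_simp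
    rw [div_le_div_iff₀ hch (by linarith)]
    calc _ ≤ (n * C + n^2/2 * L) * ((n:ℝ) - 1) := mul_le_mul_of_nonneg_right hmain (by linarith)
      _ = _ := by unfold choose2; ring
  have hlim : Tendsto (fun n : ℕ => (2 * C + n * L) / ((n:ℝ) - 1)) atTop (nhds L) := by
    have h1 : Tendsto (fun n : ℕ => L + (2 * C + L) / ((n:ℝ) - 1)) atTop (nhds (L + 0)) := by
      apply tendsto_const_nhds.add
      apply Tendsto.const_div_atTop
      exact tendsto_atTop_add_const_right _ _ tendsto_natCast_atTop_atTop
    rw [add_zero] at h1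
    refine h1.congr' ?_
    filter_upwards [eventually_ge_atTop 2] with n hn
    have hn' : (2:ℝ) ≤ n := by exact_mod_cast hn
    have : (n:ℝ) - 1 ≠ 0 := by linarith
    field_simp; ring
  rw [← hlim.limsup_eq]
  refine limsup_le_limsup (eventually_atTop.mpr ⟨2, hbound⟩) ?_ hlim.isBoundedUnder_le
  apply IsBoundedUnder.isCoboundedUnder_le
  refine ⟨0, ?_⟩
  rw [eventually_map]
  filter_upwards [eventually_ge_atTop 2] with n hn
  have hn' : (2:ℝ) ≤ n := by exact_mod_cast hn
  have hch : 0 ≤ choose2 n := by unfold choose2; nlinarith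
  refine div_nonneg (div_nonneg (Real.log_natCast_nonneg _) hl2.le) hch

end
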